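/- Riesz distribution convergence: let F be a Schwartz function on M_{n,q} ≅ ℝ^{nq} with n ≥ q. The integral ζ_F(α) = ∫_{M_{n,q}} F(x) (det(xᵀx))^{(α-n)/2} dx converges absolutely for Re α > q - 1. -/

import Mathlib

open MeasureTheory Module Matrix
open scoped ENNReal Classical

noncomputable section

/-- `ℝⁿ` as a Euclidean space. -/
abbrev Euc (n : ℕ) := EuclideanSpace ℝ (Fin n)

/-- Siegel gamma function `Γ_k(α) = π^{k(k-1)/4} ∏_{j=0}^{k-1} Γ(α - j/2)`. -/
def siegelGamma (k : ℕ) (α : ℝ) : ℝ :=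
  Real.pi ^ ((k : ℝ) * ((k : ℝ) - 1) / 4) *
    ∏ j ∈ Finset.range k, Real.Gamma (α - (j : ℝ) / 2)

/-- `σ_{n,k} = 2^k π^{nk/2} / Γ_k(n/2)`, the total measure of the Stiefel manifold. -/
def sigmaStiefel (n k : ℕ) : ℝ :=
  2 ^ k * Real.pi ^ ((n : ℝ) * (k : ℝ) / 2) / siegelGamma k ((n : ℝ) / 2)

/-!
Peel off the columns of `x` one at a time. If `V` is the span of the columns `y₁, …, y_k`, then
adjoining a column `v` multiplies the Gram determinant by `‖P v‖²`, where `P` is the orthogonal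
projection onto `Vᗮ`. With `s = Re α - n`, the function `(1 + ‖v‖)^(-N) ‖P v‖ ^ s` is dominated by a
product of functions on `V` and `Vᗮ`, and is integrable as soon as `-dim Vᗮ < s` and `n + s < N`. By
rotation invariance its integral depends only on `dim V`, so it is bounded uniformly in
`y₁, …, y_k`, and Fubini applies. The worst case `k = q - 1` is the condition `q - 1 < Re α`.
-/

open Set Filter Asymptotics

theorem integrableOn_Ioi_rpow_mul_one_add_rpow_neg {a b : ℝ} (ha : 0 < a) (hab : a < b) :
    IntegrableOn (fun t : ℝ => t ^ (a - 1) * (1 + t) ^ (-b)) (Ioi 0) := by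
  have hb : 0 ≤ b := (ha.trans hab).le
  refine mellin_convergent_of_isBigO_scalar (a := b) (b := 0) ?_ ?_ hab ?_ ha
  · refine ContinuousOn.locallyIntegrableOn (fun t ht => ?_) measurableSet_Ioi
    have : 1 + t ≠ 0 := (add_pos one_pos ht).ne'
    exact ContinuousAt.continuousWithinAt (by fun_prop (disch := simp [this]))
  · refine IsBigO.of_bound 1 ((eventually_gt_atTop 0).mono fun t ht => ?_)
    rw [one_mul, Real.norm_of_nonneg (by positivity), Real.norm_of_nonneg (by positivity)]
    exact Real.rpow_le_rpow_of_nonpos ht (by linarith) (neg_nonpos.2 hb)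
  · refine IsBigO.of_bound 1 (eventually_nhdsWithin_of_forall fun t (ht : 0 < t) => ?_)
    rw [Real.norm_of_nonneg (by positivity), neg_zero, Real.rpow_zero, norm_one, one_mul]
    exact Real.rpow_le_one_of_one_le_of_nonpos (by linarith) (neg_nonpos.2 hb)

theorem integrable_one_add_norm_rpow_neg_mul_norm_rpow {E : Type*} [NormedAddCommGroup E]
    [NormedSpace ℝ E] [FiniteDimensional ℝ E] [MeasurableSpace E] [BorelSpace E]
    (μ : Measure E) [μ.IsAddHaarMeasure] {s N : ℝ} (hs : -(finrank ℝ E : ℝ) < s)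
    (hN : finrank ℝ E + s < N) :
    Integrable (fun x : E => (1 + ‖x‖) ^ (-N) * ‖x‖ ^ s) μ := by
  cases subsingleton_or_nontrivial E with
  | inl _ =>
    exact continuous_of_const (fun x y => by rw [Subsingleton.elim x y])
      |>.integrable_of_hasCompactSupport (.of_compactSpace _)
  | inr _ =>
    refine (integrable_fun_norm_addHaar μ (f := fun t => (1 + t) ^ (-N) * t ^ s)).2 ?_
    refine (integrableOn_Ioi_rpow_mul_one_add_rpow_neg (by linarith) hN).congr_fun
      (fun t (ht : 0 < t) => ?_) measurableSet_Ioi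
    have hpow : t ^ (finrank ℝ E + s - 1) = t ^ (finrank ℝ E - 1) * t ^ s := by
      rw [← Real.rpow_natCast, ← Real.rpow_add ht, Nat.cast_pred finrank_pos]
      ring_nf
    simp only [hpow, smul_eq_mul]
    ring

theorem integrable_comp_continuousLinearEquiv {E F G : Type*} [NormedAddCommGroup E]
    [NormedSpace ℝ E] [MeasurableSpace E] [BorelSpace E]
    [NormedAddCommGroup F] [NormedSpace ℝ F] [FiniteDimensional ℝ F] [MeasurableSpace F]
    [BorelSpace F] [NormedAddCommGroup G] (L : E ≃L[ℝ] F) (μ : Measure E) [μ.IsAddHaarMeasure]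
    {ν : Measure F} [ν.IsAddHaarMeasure] {f : F → G} (hf : Integrable f ν) :
    Integrable (f ∘ L) μ := by
  have : (μ.map L).IsAddHaarMeasure := L.isAddHaarMeasure_map μ
  refine (L.toHomeomorph.measurableEmbedding.integrable_map_iff (μ := μ)).1 ?_
  change Integrable f (μ.map L)
  rw [Measure.isAddLeftInvariant_eq_smul (μ.map L) ν]
  exact hf.smul_measure_nnreal

theorem integrable_prod_mul_of_integral_norm_le {X Y : Type*} [MeasurableSpace X]
    [MeasurableSpace Y] {μ : Measure X} {ν : Measure Y} [SFinite μ] [SFinite ν]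
    {φ : X → Y → ℝ} {g : Y → ℝ} {C : ℝ}
    (hm : AEStronglyMeasurable (fun p : X × Y => φ p.1 p.2 * g p.2) (μ.prod ν))
    (hφ : ∀ y, Integrable (φ · y) μ) (hC : ∀ y, ∫ x, ‖φ x y‖ ∂μ ≤ C) (hg : Integrable g ν) :
    Integrable (fun p : X × Y => φ p.1 p.2 * g p.2) (μ.prod ν) := by
  refine (integrable_prod_iff' hm).2 ⟨.of_forall fun y => (hφ y).mul_const (g y), ?_⟩
  refine (hg.norm.const_mul C).mono' hm.norm.prod_swap.integral_prod_right' (.of_forall fun y => ?_)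
  simp only [norm_mul, integral_mul_const, norm_norm]
  rw [Real.norm_of_nonneg (integral_nonneg fun _ => norm_nonneg _)]
  exact mul_le_mul_of_nonneg_right (hC y) (norm_nonneg _)

section Projection

variable {E : Type*} [NormedAddCommGroup E] [InnerProductSpace ℝ E] [FiniteDimensional ℝ E]

theorem exists_linearIsometryEquiv_map_eq_of_finrank_eq {V W : Submodule ℝ E}
    (h : finrank ℝ V = finrank ℝ W) :
    ∃ e : E ≃ₗᵢ[ℝ] E, V.map (e.toLinearEquiv : E →ₗ[ℝ] E) = W := by
  let φ : V ≃ₗᵢ[ℝ] W :=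
    (stdOrthonormalBasis ℝ V).equiv (stdOrthonormalBasis ℝ W) (finCongr h)
  let ψ : E →ₗᵢ[ℝ] E := (W.subtypeₗᵢ.comp φ.toLinearIsometry).extend
  have hψ (v : V) : ψ v = φ v := LinearIsometry.extend_apply _ v
  refine ⟨ψ.toLinearIsometryEquiv rfl, Submodule.ext fun w => ⟨?_, fun hw => ?_⟩⟩
  · rintro ⟨v, hv, rfl⟩
    exact (hψ ⟨v, hv⟩).symm ▸ (φ ⟨v, hv⟩).2
  · refine ⟨φ.symm ⟨w, hw⟩, (φ.symm ⟨w, hw⟩).2, (hψ _).trans ?_⟩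
    rw [φ.apply_symm_apply]

variable [MeasurableSpace E] [BorelSpace E]

theorem integral_norm_starProjection_orthogonal_eq_of_finrank_eq {G : Type*}
    [NormedAddCommGroup G] [NormedSpace ℝ G] (f : ℝ → ℝ → G) {V W : Submodule ℝ E}
    (h : finrank ℝ V = finrank ℝ W) :
    ∫ v, f ‖v‖ ‖Vᗮ.starProjection v‖ = ∫ v, f ‖v‖ ‖Wᗮ.starProjection v‖ := by
  obtain ⟨e, rfl⟩ := exists_linearIsometryEquiv_map_eq_of_finrank_eq h
  rw [← e.measurePreserving.integral_comp e.toHomeomorph.measurableEmbedding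
    fun v => f ‖v‖ ‖(V.map (e.toLinearEquiv : E →ₗ[ℝ] E))ᗮ.starProjection v‖]
  simp only [← Submodule.map_orthogonal_equiv, Submodule.starProjection_map_apply,
    LinearIsometryEquiv.norm_map, LinearIsometryEquiv.symm_apply_apply]

theorem bddAbove_range_integral_norm_starProjection_orthogonal (f : ℝ → ℝ → ℝ) :
    BddAbove (range fun V : Submodule ℝ E => ∫ v, f ‖v‖ ‖Vᗮ.starProjection v‖) := by
  have hfactor : Function.FactorsThrough
      (fun V : Submodule ℝ E => ∫ v, f ‖v‖ ‖Vᗮ.starProjection v‖) fun V => finrank ℝ V :=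
    fun _ _ h => integral_norm_starProjection_orthogonal_eq_of_finrank_eq f h
  obtain ⟨c, hc⟩ := (Function.factorsThrough_iff _).1 hfactor
  refine (((finite_Iic (finrank ℝ E)).image c).bddAbove).mono ?_
  rw [hc]
  rintro _ ⟨V, rfl⟩
  exact mem_image_of_mem c V.finrank_le

theorem measurePreserving_orthogonalProjectionOnto_prod (V : Submodule ℝ E) :
    MeasurePreserving fun v : E =>
      (V.orthogonalProjectionOnto v, Vᗮ.orthogonalProjectionOnto v) := by
  simpa [Function.comp_def] using
    (WithLp.volume_preserving_ofLp V Vᗮ).comp V.orthogonalDecomposition.measurePreserving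

theorem integrable_one_add_norm_rpow_neg_mul_norm_starProjection_rpow (V : Submodule ℝ E)
    {s N : ℝ} (hs : -(finrank ℝ Vᗮ : ℝ) < s) (hN : finrank ℝ E + s < N) :
    Integrable fun v : E => (1 + ‖v‖) ^ (-N) * ‖Vᗮ.starProjection v‖ ^ s := by
  have hdim : (finrank ℝ V : ℝ) + finrank ℝ Vᗮ = finrank ℝ E := mod_cast
    V.finrank_add_finrank_orthogonal
  obtain ⟨M, hM, hMN⟩ : ∃ M, (finrank ℝ V : ℝ) < M ∧ finrank ℝ Vᗮ + s < N - M := by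
    obtain ⟨M, hM⟩ := exists_between (a₁ := (finrank ℝ V : ℝ)) (a₂ := N - (finrank ℝ Vᗮ + s))
      (by linarith)
    exact ⟨M, hM.1, by linarith [hM.2]⟩
  have hM₀ : 0 ≤ M := (Nat.cast_nonneg _).trans hM.le
  have hprod := (integrable_one_add_norm (μ := (volume : Measure V)) hM).mul_prod
    (integrable_one_add_norm_rpow_neg_mul_norm_rpow (volume : Measure Vᗮ) hs hMN)
  refine ((measurePreserving_orthogonalProjectionOnto_prod V).integrable_comp_of_integrable
    hprod).mono' (by fun_prop) (.of_forall fun v => ?_)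
  rw [Real.norm_of_nonneg (by positivity), Submodule.starProjection_apply, ← Submodule.coe_norm]
  calc (1 + ‖v‖) ^ (-N) * ‖Vᗮ.orthogonalProjectionOnto v‖ ^ s
      = (1 + ‖v‖) ^ (-M) * (1 + ‖v‖) ^ (-(N - M)) * ‖Vᗮ.orthogonalProjectionOnto v‖ ^ s := by
        rw [← Real.rpow_add (by positivity)]
        ring_nf
    _ ≤ (1 + ‖V.orthogonalProjectionOnto v‖) ^ (-M) *
          (1 + ‖Vᗮ.orthogonalProjectionOnto v‖) ^ (-(N - M)) *
          ‖Vᗮ.orthogonalProjectionOnto v‖ ^ s := by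
        gcongr ?_ * ?_ * _
        · exact Real.rpow_le_rpow_of_nonpos (by positivity)
            (by gcongr; exact V.norm_orthogonalProjectionOnto_apply_le v) (neg_nonpos.2 hM₀)
        · exact Real.rpow_le_rpow_of_nonpos (by positivity)
            (by gcongr; exact Vᗮ.norm_orthogonalProjectionOnto_apply_le v) (by linarith)
    _ = _ := mul_assoc _ _ _

end Projection

section GramDet

variable {E : Type*} [NormedAddCommGroup E] [InnerProductSpace ℝ E]

/-- Row reduction: subtracting from row `0` the combination of the other rows that represents `w`
leaves `(‖r‖², 0, …, 0)`. -/
theorem det_gram_cons_add_of_mem_span {k : ℕ} {r w : E} {y : Fin k → E}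
    (hr : r ∈ (Submodule.span ℝ (range y))ᗮ) (hw : w ∈ Submodule.span ℝ (range y)) :
    (gram ℝ (Fin.cons (w + r) y : Fin (k + 1) → E)).det = ‖r‖ ^ 2 * (gram ℝ y).det := by
  set z : Fin (k + 1) → E := Fin.cons (w + r) y
  obtain ⟨c, hc⟩ := (Submodule.mem_span_range_iff_exists_fun ℝ).1 hw
  let d : Fin (k + 1) → ℝ := Fin.cons 1 fun i => -c i
  have hrd : r = ∑ i, d i • z i := by
    simp [Fin.sum_univ_succ, d, z, hc]
  have hrow : ∑ i, d i • gram ℝ z i = Fin.cons (‖r‖ ^ 2) 0 := by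
    trans fun j => inner ℝ r (z j)
    · ext j
      conv_rhs => rw [hrd, sum_inner]
      simp [inner_smul_left]
    · refine funext (Fin.cases ?_ fun i => ?_)
      · simp [z, inner_add_right, Submodule.inner_left_of_mem_orthogonal hw hr]
      · exact Submodule.inner_left_of_mem_orthogonal (Submodule.subset_span (mem_range_self i)) hr
  calc (gram ℝ z).det = ((gram ℝ z).updateRow 0 (∑ i, d i • gram ℝ z i)).det := by
        rw [Matrix.det_updateRow_sum, show d 0 = 1 from rfl, one_smul]
    _ = ‖r‖ ^ 2 * (((gram ℝ z).updateRow 0 (Fin.cons (‖r‖ ^ 2) 0)).submatrix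
          Fin.succ Fin.succ).det := by
        rw [hrow, det_succ_row_zero, Fin.sum_univ_succ]
        simp
    _ = ‖r‖ ^ 2 * (gram ℝ y).det := rfl

theorem det_gram_cons {k : ℕ} (v : E) (y : Fin k → E)
    [(Submodule.span ℝ (range y)).HasOrthogonalProjection] :
    (gram ℝ (Fin.cons v y : Fin (k + 1) → E)).det =
      ‖(Submodule.span ℝ (range y))ᗮ.starProjection v‖ ^ 2 * (gram ℝ y).det := by
  conv_lhs => rw [← (Submodule.span ℝ (range y)).starProjection_add_starProjection_orthogonal v]
  exact det_gram_cons_add_of_mem_span (Submodule.starProjection_apply_mem _ _)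
    (Submodule.starProjection_apply_mem _ _)

theorem continuous_det_gram {ι : Type*} [Fintype ι] [DecidableEq ι] :
    Continuous fun y : ι → E => (gram ℝ y).det := by
  refine Continuous.matrix_det (continuous_matrix fun i j => ?_)
  simp only [gram_apply]
  fun_prop

theorem det_gram_rpow_half_cons {k : ℕ} (v : E) (y : Fin k → E)
    [(Submodule.span ℝ (range y)).HasOrthogonalProjection] (s : ℝ) :
    (gram ℝ (Fin.cons v y : Fin (k + 1) → E)).det ^ (s / 2) =
      ‖(Submodule.span ℝ (range y))ᗮ.starProjection v‖ ^ s * (gram ℝ y).det ^ (s / 2) := by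
  rw [det_gram_cons, Real.mul_rpow (by positivity) (posSemidef_gram ℝ y).det_nonneg,
    ← Real.rpow_natCast, ← Real.rpow_mul (norm_nonneg _)]
  simp [mul_div_cancel₀]

/-- The integrand of the Riesz distribution in terms of the columns `y` of a matrix: the power
`|y|_k ^ s` of the volume `|y|_k = (det gram y)^(1/2)`, damped by a weight `(1 + ‖yᵢ‖)^(-N)` for
each column. -/
def gramKernel {ι : Type*} [Fintype ι] [DecidableEq ι] (s N : ℝ) (y : ι → E) : ℝ :=
  (∏ i, (1 + ‖y i‖) ^ (-N)) * (gram ℝ y).det ^ (s / 2)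

theorem gramKernel_cons {k : ℕ} (s N : ℝ) (v : E) (y : Fin k → E)
    [(Submodule.span ℝ (range y)).HasOrthogonalProjection] :
    gramKernel s N (Fin.cons v y : Fin (k + 1) → E) =
      ((1 + ‖v‖) ^ (-N) * ‖(Submodule.span ℝ (range y))ᗮ.starProjection v‖ ^ s) *
        gramKernel s N y := by
  simp only [gramKernel, det_gram_rpow_half_cons, Fin.prod_univ_succ, Fin.cons_zero, Fin.cons_succ]
  ring

variable [FiniteDimensional ℝ E] [MeasurableSpace E] [BorelSpace E]

theorem measurable_gramKernel {ι : Type*} [Fintype ι] [DecidableEq ι] (s N : ℝ) :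
    Measurable (gramKernel s N : (ι → E) → ℝ) := by
  have := (continuous_det_gram (E := E) (ι := ι)).measurable
  unfold gramKernel
  fun_prop

theorem integrable_gramKernel (k : ℕ) {s N : ℝ} (hs : (k : ℝ) - 1 - finrank ℝ E < s)
    (hN : finrank ℝ E + s < N) : Integrable (gramKernel s N : (Fin k → E) → ℝ) := by
  induction k with
  | zero => simp [volume_pi]
  | succ k ih =>
    push_cast at hs
    let V (y : Fin k → E) := Submodule.span ℝ (range y)
    let φ (v : E) (y : Fin k → E) := (1 + ‖v‖) ^ (-N) * ‖(V y)ᗮ.starProjection v‖ ^ s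
    obtain ⟨C, hC⟩ := bddAbove_range_integral_norm_starProjection_orthogonal (E := E)
      fun a b => ‖(1 + a) ^ (-N) * b ^ s‖
    have hφ (y : Fin k → E) : Integrable (φ · y) := by
      have hdim : (finrank ℝ E : ℝ) ≤ k + finrank ℝ (V y)ᗮ := by
        rw [← (V y).finrank_add_finrank_orthogonal]
        exact_mod_cast Nat.add_le_add_right (finrank_range_le_card y |>.trans_eq (by simp)) _
      exact integrable_one_add_norm_rpow_neg_mul_norm_starProjection_rpow (V y) (by linarith) hN
    have he := (volume_preserving_piFinSuccAbove (fun _ : Fin (k + 1) => E) 0).symm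
    have hcomp : (gramKernel s N ∘ (MeasurableEquiv.piFinSuccAbove (fun _ => E) 0).symm) =
        fun p : E × (Fin k → E) => φ p.1 p.2 * gramKernel s N p.2 := by
      funext ⟨v, y⟩
      exact (congrArg (gramKernel s N) (Fin.insertNth_zero' v y)).trans (gramKernel_cons s N v y)
    have hmeas := ((measurable_gramKernel s N).comp he.measurable).aestronglyMeasurable
      (μ := (volume : Measure E).prod (volume : Measure (Fin k → E)))
    rw [← he.integrable_comp_emb (MeasurableEquiv.measurableEmbedding _)]
    rw [hcomp] at hmeas ⊢
    exact integrable_prod_mul_of_integral_norm_le hmeas hφ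
      (fun y => hC (mem_range_self (V y))) (ih (by linarith))

end GramDet

theorem one_add_norm_rpow_neg_le_prod {ι : Type*} [Fintype ι] [Nonempty ι] {E : ι → Type*}
    [∀ i, SeminormedAddCommGroup (E i)] {r : ℝ} (hr : 0 ≤ r) (y : ∀ i, E i) :
    (1 + ‖y‖) ^ (-r) ≤ ∏ i, (1 + ‖y i‖) ^ (-(r / Fintype.card ι)) := by
  have hι : (Fintype.card ι : ℝ) ≠ 0 := by simp
  calc (1 + ‖y‖) ^ (-r) = ∏ _i : ι, (1 + ‖y‖) ^ (-(r / Fintype.card ι)) := by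
        rw [Finset.prod_const, Finset.card_univ, ← Real.rpow_mul_natCast (by positivity)]
        field_simp
    _ ≤ ∏ i, (1 + ‖y i‖) ^ (-(r / Fintype.card ι)) := by
        refine Finset.prod_le_prod (fun i _ => by positivity) fun i _ => ?_
        exact Real.rpow_le_rpow_of_nonpos (by positivity) (by gcongr; exact norm_le_pi_norm y i)
          (neg_nonpos.2 (by positivity))

theorem exists_one_add_norm_rpow_neg_le_comp {E F : Type*} [SeminormedAddCommGroup E]
    [NormedSpace ℝ E] [SeminormedAddCommGroup F] [NormedSpace ℝ F] (L : E →L[ℝ] F) {r : ℝ}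
    (hr : 0 ≤ r) :
    ∃ C, 0 ≤ C ∧ ∀ x, (1 + ‖x‖) ^ (-r) ≤ C * (1 + ‖L x‖) ^ (-r) := by
  refine ⟨(1 + ‖L‖) ^ r, by positivity, fun x => ?_⟩
  have hL : 1 + ‖L x‖ ≤ (1 + ‖L‖) * (1 + ‖x‖) := by
    nlinarith [L.le_opNorm x, norm_nonneg x, norm_nonneg L]
  calc (1 + ‖x‖) ^ (-r) = (1 + ‖L‖) ^ r * ((1 + ‖L‖) * (1 + ‖x‖)) ^ (-r) := by
        rw [Real.mul_rpow (by positivity) (by positivity), ← mul_assoc,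
          ← Real.rpow_add (by positivity), add_neg_cancel, Real.rpow_zero, one_mul]
    _ ≤ (1 + ‖L‖) ^ r * (1 + ‖L x‖) ^ (-r) := by
        exact mul_le_mul_of_nonneg_left
          (Real.rpow_le_rpow_of_nonpos (by positivity) hL (neg_nonpos.2 hr)) (by positivity)

/-- The identification of `M_{m,ι}` with the space of `ι`-tuples of columns in Euclidean space. -/
def matrixColumns (m ι : Type*) [Fintype m] [Fintype ι] :
    (m → ι → ℝ) ≃L[ℝ] (ι → EuclideanSpace ℝ m) :=
  LinearEquiv.toContinuousLinearEquiv
    { toFun x j := WithLp.toLp 2 fun i => x i j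
      invFun y i j := y j i
      map_add' _ _ := rfl
      map_smul' _ _ := rfl
      left_inv _ := rfl
      right_inv _ := rfl }

theorem matrixColumns_apply {m ι : Type*} [Fintype m] [Fintype ι] (x : m → ι → ℝ) (j : ι) :
    matrixColumns m ι x j = WithLp.toLp 2 fun i => x i j :=
  rfl

theorem gram_matrixColumns {m ι : Type*} [Fintype m] [Fintype ι] (x : m → ι → ℝ) :
    gram ℝ (matrixColumns m ι x) = (of x)ᵀ * of x := by
  ext i j
  simp [matrixColumns_apply, mul_apply, PiLp.inner_apply, mul_comm]

theorem det_transpose_mul_self_nonneg {m ι : Type*} [Fintype m] [Fintype ι] [DecidableEq ι]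
    (A : Matrix m ι ℝ) : 0 ≤ (Aᵀ * A).det := by
  simpa using (posSemidef_conjTranspose_mul_self A).det_nonneg

theorem measurable_det_transpose_mul_self {m ι : Type*} [Fintype m] [Fintype ι] [DecidableEq ι] :
    Measurable fun x : m → ι → ℝ => ((of x)ᵀ * of x).det := by
  refine Continuous.measurable (Continuous.matrix_det ?_)
  exact continuous_id.matrix_transpose.matrix_mul continuous_id

theorem integrable_one_add_norm_rpow_neg_mul_det_transpose_mul_self_rpow {n q : ℕ} (hq : 1 ≤ q)
    {s r : ℝ} (hs : (q : ℝ) - 1 - n < s) (hr : q * (n + s) < r) :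
    Integrable fun x : Fin n → Fin q → ℝ =>
      (1 + ‖x‖) ^ (-r) * ((of x)ᵀ * of x).det ^ (s / 2) := by
  have : Nonempty (Fin q) := ⟨⟨0, hq⟩⟩
  have hq₁ : (1 : ℝ) ≤ q := mod_cast hq
  have hr₀ : 0 ≤ r := (mul_nonneg (by linarith) (by linarith)).trans hr.le
  have : (volume : Measure (Fin q → EuclideanSpace ℝ (Fin n))).IsAddHaarMeasure :=
    inferInstanceAs (Measure.pi fun _ => volume).IsAddHaarMeasure
  let L := matrixColumns (Fin n) (Fin q)
  obtain ⟨C, hC₀, hC⟩ := exists_one_add_norm_rpow_neg_le_comp L.toContinuousLinearMap hr₀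
  have hkernel : Integrable (gramKernel s (r / q) : (Fin q → EuclideanSpace ℝ (Fin n)) → ℝ) :=
    integrable_gramKernel q (by simpa using hs)
      (by rw [lt_div_iff₀' (by linarith)]; simpa using hr)
  refine ((integrable_comp_continuousLinearEquiv L volume hkernel).const_mul C).mono' ?_
    (.of_forall fun x => ?_)
  · have := measurable_det_transpose_mul_self (m := Fin n) (ι := Fin q)
    fun_prop
  · have hdet := Real.rpow_nonneg (det_transpose_mul_self_nonneg (of x)) (s / 2)
    rw [Real.norm_of_nonneg (by positivity), Function.comp_apply, gramKernel, gram_matrixColumns,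
      ← mul_assoc]
    gcongr
    calc (1 + ‖x‖) ^ (-r) ≤ C * (1 + ‖L x‖) ^ (-r) := hC x
      _ ≤ C * ∏ j, (1 + ‖L x j‖) ^ (-(r / q)) := by
        gcongr
        simpa using one_add_norm_rpow_neg_le_prod hr₀ (L x)

theorem norm_ofReal_cpow_le_rpow_re {t : ℝ} (ht : 0 ≤ t) (z : ℂ) : ‖(t : ℂ) ^ z‖ ≤ t ^ z.re := by
  simpa [Complex.arg_ofReal_of_nonneg ht, abs_of_nonneg ht] using Complex.norm_cpow_le t z

theorem exists_norm_schwartzMap_le_one_add_norm_rpow_neg {E F : Type*} [NormedAddCommGroup E]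
    [NormedSpace ℝ E] [NormedAddCommGroup F] [NormedSpace ℝ F] (f : SchwartzMap E F) (r : ℝ) :
    ∃ C, ∀ x, ‖f x‖ ≤ C * (1 + ‖x‖) ^ (-r) := by
  obtain ⟨k, hk⟩ := exists_nat_ge r
  refine ⟨2 ^ k * (Finset.Iic (k, 0)).sup (fun m => SchwartzMap.seminorm ℝ m.1 m.2) f,
    fun x => ?_⟩
  rw [Real.rpow_neg (by positivity), ← div_eq_mul_inv, le_div_iff₀' (by positivity)]
  calc (1 + ‖x‖) ^ r * ‖f x‖ ≤ (1 + ‖x‖) ^ k * ‖f x‖ := by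
        gcongr
        exact_mod_cast Real.rpow_le_rpow_of_exponent_le (by linarith [norm_nonneg x]) hk
    _ ≤ _ := by
        simpa only [norm_iteratedFDeriv_zero] using
          SchwartzMap.one_add_le_sup_seminorm_apply (𝕜 := ℝ) (m := (k, 0)) le_rfl le_rfl f x

/-- The threshold `q * Re α` for the decay rate `r` is the degree of homogeneity of
`|x|_q ^ (Re α - n) dx`. -/
theorem riesz_distribution_convergence_general {n q : ℕ} (hq : 1 ≤ q) {α : ℂ}
    (hα : (q : ℝ) - 1 < α.re) {E : Type*} [NormedAddCommGroup E] [NormedSpace ℂ E]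
    {F : (Fin n → Fin q → ℝ) → E} (hFm : AEStronglyMeasurable F) {C r : ℝ} (hr : q * α.re < r)
    (hF : ∀ᵐ x, ‖F x‖ ≤ C * (1 + ‖x‖) ^ (-r)) :
    Integrable fun x : Fin n → Fin q → ℝ =>
      ((((of x)ᵀ * of x).det : ℝ) : ℂ) ^ ((α - n) / 2) • F x := by
  have hkernel := integrable_one_add_norm_rpow_neg_mul_det_transpose_mul_self_rpow (n := n) hq
    (s := α.re - n) (r := r) (by linarith) (by simpa using hr)
  have hpow : Measurable fun x : Fin n → Fin q → ℝ =>
      ((((of x)ᵀ * of x).det : ℝ) : ℂ) ^ ((α - n) / 2) :=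
    (Complex.measurable_ofReal.comp measurable_det_transpose_mul_self).pow_const _
  refine (hkernel.const_mul C).mono' (hpow.aestronglyMeasurable.smul hFm) ?_
  filter_upwards [hF] with x hx
  have hre : ((α - n) / 2).re = (α.re - n) / 2 := by simp
  have hdet := norm_ofReal_cpow_le_rpow_re (det_transpose_mul_self_nonneg (of x)) ((α - n) / 2)
  rw [hre] at hdet
  calc ‖((((of x)ᵀ * of x).det : ℝ) : ℂ) ^ ((α - n) / 2) • F x‖
      ≤ ((of x)ᵀ * of x).det ^ ((α.re - n) / 2) * (C * (1 + ‖x‖) ^ (-r)) := by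
        rw [norm_smul]
        gcongr
        exact (norm_nonneg _).trans hdet
    _ = C * ((1 + ‖x‖) ^ (-r) * ((of x)ᵀ * of x).det ^ ((α.re - n) / 2)) := by ring

/-- Riesz distribution convergence: for a Schwartz function `F` on
`M_{n,q} ≅ ℝ^{nq}` (`n ≥ q`), the Riesz-type integral
`ζ_F(α) = ∫_{M_{n,q}} F(x) (det(xᵀx))^{(α-n)/2} dx` converges absolutely
whenever `Re α > q - 1`. -/
theorem riesz_distribution_convergence (n q : ℕ) (hq : 1 ≤ q) (hqn : q ≤ n)
    (F : SchwartzMap (Fin n → Fin q → ℝ) ℂ) (α : ℂ) (hα : (q : ℝ) - 1 < α.re) :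
    Integrable (fun x : Fin n → Fin q → ℝ =>
      F x * (((((Matrix.of x)ᵀ * Matrix.of x).det : ℝ) : ℂ)) ^ ((α - (n : ℂ)) / 2)) := by
  obtain ⟨C, hC⟩ := exists_norm_schwartzMap_le_one_add_norm_rpow_neg F (q * α.re + 1)
  simpa only [smul_eq_mul, mul_comm] using riesz_distribution_convergence_general hq hα
    F.continuous.aestronglyMeasurable (lt_add_one _) (.of_forall hC)

end
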